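/- arXiv:2505.14817 — 4 statements merged into one kernel-verified Lean document; each statement's English description precedes it below -/
import Mathlib

section
/- Let ℓ^1,…,ℓ^N : ℝ^n → ℝ be differentiable functions and for each i let x*ⁱ be a global minimizer of ℓ^i over ℝ^n. If a point x† ∈ ℝ^n satisfies h(x†) = 0, where h is the DiBS vector field, then x† is Pareto stationary for ℓ^1,…,ℓ^N; equivalently, every fixed point of the DiBS update map x ↦ x − α·h(x) (for any fixed step size α > 0) is Pareto stationary. -/
/-!
Where `∇ℓⁱ(x) = 0` the `i`-th summand of `h(x)` vanishes, so `∇ℓⁱ(x)` may be given any coefficient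
there, in particular `1`. Where `∇ℓⁱ(x) ≠ 0` the point `x` differs from the critical point `x*ⁱ`, so
the coefficient `‖x − x*ⁱ‖ / ‖∇ℓⁱ(x)‖` is positive as well. Hence `h(x)` is a combination of the
gradients with positive coefficients, and dividing `h(x) = 0` by the sum of the coefficients gives a
vanishing convex combination.
-/

open scoped RealInnerProductSpace BigOperators Classical

/-- The DiBS vector field: `h(x) = ∑ i, ‖x − x*ⁱ‖ · ∇ℓⁱ(x)/‖∇ℓⁱ(x)‖`,
with the `i`-th summand taken to be `0` whenever `∇ℓⁱ(x) = 0`. -/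
noncomputable def dibsField {n N : ℕ} (ℓ : Fin N → EuclideanSpace ℝ (Fin n) → ℝ)
    (xstar : Fin N → EuclideanSpace ℝ (Fin n)) (x : EuclideanSpace ℝ (Fin n)) :
    EuclideanSpace ℝ (Fin n) :=
  ∑ i, if gradient (ℓ i) x ≠ 0 then
    (‖x - xstar i‖ / ‖gradient (ℓ i) x‖) • gradient (ℓ i) x else 0

/-- `x` is Pareto stationary for the costs `ℓ¹, …, ℓᴺ`. -/
def ParetoStationary {n N : ℕ} (ℓ : Fin N → EuclideanSpace ℝ (Fin n) → ℝ)
    (x : EuclideanSpace ℝ (Fin n)) : Prop :=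
  ∃ β : Fin N → ℝ, (∀ i, 0 ≤ β i) ∧ (∑ i, β i) = 1 ∧ (∑ i, β i • gradient (ℓ i) x) = 0

section SingleCost

variable {F : Type*} [NormedAddCommGroup F] [InnerProductSpace ℝ F] [CompleteSpace F]
  {f : F → ℝ} {p x : F}

lemma hasGradientAt_zero_of_isLocalExtr (hf : DifferentiableAt ℝ f x) (hx : IsLocalExtr f x) :
    HasGradientAt f 0 x := by
  simpa only [gradient, hx.fderiv_eq_zero, map_zero] using hf.hasGradientAt

/-- The coefficient of `∇f(x)` in the DiBS summand of a cost `f` with reference point `p`. Where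
`∇f(x) = 0` every coefficient gives the same summand; the choice of `1` keeps it positive. -/
noncomputable def dibsWeight (f : F → ℝ) (p x : F) : ℝ :=
  if gradient f x ≠ 0 then ‖x - p‖ / ‖gradient f x‖ else 1

lemma dibsWeight_pos (hp : gradient f p = 0) : 0 < dibsWeight f p x := by
  unfold dibsWeight
  split_ifs with hx
  · have hxp : x ≠ p := by
      rintro rfl
      exact hx hp
    exact div_pos (norm_sub_pos_iff.mpr hxp) (norm_pos_iff.mpr hx)
  · exact one_pos

lemma dibsWeight_smul_gradient (f : F → ℝ) (p x : F) [Decidable (gradient f x ≠ 0)] :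
    dibsWeight f p x • gradient f x =
      if gradient f x ≠ 0 then (‖x - p‖ / ‖gradient f x‖) • gradient f x else 0 := by
  unfold dibsWeight
  split_ifs with hx
  · rfl
  · rw [not_not.mp hx, smul_zero]

end SingleCost

lemma dibsField_eq_sum_dibsWeight_smul_gradient {n N : ℕ}
    (ℓ : Fin N → EuclideanSpace ℝ (Fin n) → ℝ) (xstar : Fin N → EuclideanSpace ℝ (Fin n))
    (x : EuclideanSpace ℝ (Fin n)) :
    dibsField ℓ xstar x = ∑ i, dibsWeight (ℓ i) (xstar i) x • gradient (ℓ i) x :=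
  Finset.sum_congr rfl fun i _ => (dibsWeight_smul_gradient (ℓ i) (xstar i) x).symm

lemma ParetoStationary.of_sum_smul_gradient_eq_zero {n N : ℕ}
    {ℓ : Fin N → EuclideanSpace ℝ (Fin n) → ℝ} {x : EuclideanSpace ℝ (Fin n)} {c : Fin N → ℝ}
    (hc : ∀ i, 0 ≤ c i) (hc_sum : 0 < ∑ i, c i) (hzero : ∑ i, c i • gradient (ℓ i) x = 0) :
    ParetoStationary ℓ x := by
  refine ⟨fun i => (∑ j, c j)⁻¹ * c i, fun i => ?_, ?_, ?_⟩
  · exact mul_nonneg (inv_nonneg.mpr hc_sum.le) (hc i)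
  · rw [← Finset.mul_sum, inv_mul_cancel₀ hc_sum.ne']
  · simp only [mul_smul, ← Finset.smul_sum, hzero, smul_zero]

theorem dibs_zero_implies_pareto_stationary_general {n N : ℕ} (hN : 0 < N)
    (ℓ : Fin N → EuclideanSpace ℝ (Fin n) → ℝ)
    (xstar : Fin N → EuclideanSpace ℝ (Fin n))
    (hcrit : ∀ i, HasGradientAt (ℓ i) 0 (xstar i))
    (xdag : EuclideanSpace ℝ (Fin n))
    (hdiff : ∀ i, DifferentiableAt ℝ (ℓ i) xdag) :
    (dibsField ℓ xstar xdag = 0 → ParetoStationary ℓ xdag) ∧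
    (∀ α : ℝ, α ≠ 0 → xdag - α • dibsField ℓ xstar xdag = xdag →
      ParetoStationary ℓ xdag) := by
  have hpos (i : Fin N) : 0 < dibsWeight (ℓ i) (xstar i) xdag :=
    dibsWeight_pos (hcrit i).gradient
  have hsum : 0 < ∑ i, dibsWeight (ℓ i) (xstar i) xdag :=
    Finset.sum_pos (fun i _ => hpos i) ⟨⟨0, hN⟩, Finset.mem_univ _⟩
  have hstat (h : dibsField ℓ xstar xdag = 0) : ParetoStationary ℓ xdag := by
    rw [dibsField_eq_sum_dibsWeight_smul_gradient] at h
    exact .of_sum_smul_gradient_eq_zero (fun i => (hpos i).le) hsum h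
  refine ⟨hstat, fun α hα hfix => hstat ?_⟩
  exact (smul_eq_zero.mp (sub_eq_self.mp hfix)).resolve_left hα

theorem dibs_zero_implies_pareto_stationary {n N : ℕ} (hN : 0 < N)
    (ℓ : Fin N → EuclideanSpace ℝ (Fin n) → ℝ)
    (xstar : Fin N → EuclideanSpace ℝ (Fin n))
    (hdiff : ∀ i, Differentiable ℝ (ℓ i))
    (hmin : ∀ i, ∀ y, ℓ i (xstar i) ≤ ℓ i y)
    (xdag : EuclideanSpace ℝ (Fin n)) :
    (dibsField ℓ xstar xdag = 0 → ParetoStationary ℓ xdag) ∧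
    (∀ α : ℝ, 0 < α → xdag - α • dibsField ℓ xstar xdag = xdag →
      ParetoStationary ℓ xdag) := by
  have hcrit (i : Fin N) : HasGradientAt (ℓ i) 0 (xstar i) :=
    hasGradientAt_zero_of_isLocalExtr (hdiff i (xstar i)) (.inl (.of_forall (hmin i)))
  have hstat := dibs_zero_implies_pareto_stationary_general hN ℓ xstar hcrit xdag (hdiff · xdag)
  exact ⟨hstat.1, fun α hα => hstat.2 α hα.ne'⟩
end

section
/- (Gordan's alternative) Let v_1,…,v_N be vectors in ℝ^n. Then there exists d ∈ ℝ^n with ⟨v_i, d⟩ < 0 for every i ∈ {1,…,N} if and only if the zero vector does not lie in the convex hull of {v_1,…,v_N}. -/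
open scoped RealInnerProductSpace BigOperators

/-! If `0` is not in the convex hull, its nearest point `p` in the hull is nonzero, and the
variational inequality for the projection gives `‖p‖ ^ 2 ≤ ⟪x, p⟫` for every `x` in the hull, so
`d = -p` works. Conversely, an open half-space containing the vectors contains their convex hull,
while `⟪·, d⟫ < 0` excludes `0`. -/

section InnerProductSpace

variable {E : Type*} [NormedAddCommGroup E] [InnerProductSpace ℝ E]

theorem inner_lt_of_mem_convexHull {s : Set E} {x d : E} {a : ℝ}
    (hs : ∀ y ∈ s, ⟪y, d⟫ < a) (hx : x ∈ convexHull ℝ s) : ⟪x, d⟫ < a :=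
  convexHull_min hs (convex_halfSpace_lt ((innerₗ E).flip d).isLinear a) hx

theorem exists_forall_mem_inner_lt_of_notMem {K : Set E} (hK : IsComplete K)
    (hconv : Convex ℝ K) {u : E} (hu : u ∉ K) : ∃ d, ∀ x ∈ K, ⟪x, d⟫ < ⟪u, d⟫ := by
  obtain rfl | hne := K.eq_empty_or_nonempty
  · simp
  obtain ⟨p, hp, hmin⟩ := exists_norm_eq_iInf_of_complete_convex hne hK hconv u
  refine ⟨u - p, fun x hx ↦ ?_⟩
  have hvar : ⟪u - p, x - p⟫ ≤ 0 :=
    (norm_eq_iInf_iff_real_inner_le_zero hconv hp).mp hmin x hx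
  have hpos : 0 < ⟪u - p, u - p⟫ :=
    real_inner_self_pos.mpr (sub_ne_zero.mpr (ne_of_mem_of_not_mem hp hu).symm)
  calc ⟪x, u - p⟫ = ⟪u, u - p⟫ + ⟪u - p, x - p⟫ - ⟪u - p, u - p⟫ := by
        rw [real_inner_comm, real_inner_comm _ u, ← inner_add_right, ← inner_sub_right]
        congr 1
        abel
    _ < ⟪u, u - p⟫ := by linarith

theorem gordan_alternative_general {s : Set E} (hs : IsComplete (convexHull ℝ s)) :
    (∃ d : E, ∀ x ∈ s, ⟪x, d⟫ < 0) ↔ (0 : E) ∉ convexHull ℝ s := by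
  constructor
  · rintro ⟨d, hd⟩ h0
    have hneg : ⟪(0 : E), d⟫ < 0 := inner_lt_of_mem_convexHull hd h0
    exact hneg.ne (inner_zero_left d)
  · intro h0
    obtain ⟨d, hd⟩ := exists_forall_mem_inner_lt_of_notMem hs (convex_convexHull ℝ s) h0
    exact ⟨d, fun x hx ↦ (hd x (subset_convexHull ℝ s hx)).trans_eq (inner_zero_left d)⟩

end InnerProductSpace

/-- Gordan's theorem of the alternative. -/
theorem gordan_alternative {n N : ℕ} (v : Fin N → EuclideanSpace ℝ (Fin n)) :
    (∃ d : EuclideanSpace ℝ (Fin n), ∀ i, ⟪v i, d⟫ < 0) ↔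
      (0 : EuclideanSpace ℝ (Fin n)) ∉ convexHull ℝ (Set.range v) := by
  simpa only [Set.forall_mem_range] using
    gordan_alternative_general ((Set.finite_range v).isCompact_convexHull ℝ).isComplete
end

section
/- Let ℓ : ℝ^n → ℝ be differentiable, μ-strongly convex (μ > 0), and L-smooth, with global minimizer x*. Define h₁ : ℝ^n → ℝ^n by h₁(x) = ‖x − x*‖·∇ℓ(x)/‖∇ℓ(x)‖ for x ≠ x* and h₁(x*) = 0. Then h₁ is Lipschitz continuous with constant 1 + 2L/μ: for all x, y ∈ ℝ^n, ‖h₁(x) − h₁(y)‖ ≤ (1 + 2L/μ)·‖x − y‖. -/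
open scoped RealInnerProductSpace Classical

/-- The single-agent DiBS term `h₁(x) = ‖x − x*‖·∇ℓ(x)/‖∇ℓ(x)‖` for `x ≠ x*`,
and `h₁(x*) = 0`. -/
noncomputable def dibsTerm {n : ℕ} (ℓ : EuclideanSpace ℝ (Fin n) → ℝ)
    (xstar : EuclideanSpace ℝ (Fin n)) (x : EuclideanSpace ℝ (Fin n)) :
    EuclideanSpace ℝ (Fin n) :=
  if x = xstar then 0 else (‖x - xstar‖ / ‖gradient ℓ x‖) • gradient ℓ x

/-!
The direction `a/‖a‖` varies with Lipschitz modulus `2/‖a‖`, which blows up as `∇ℓ(x) → 0`.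
Strong convexity gives `μ‖x − x*‖ ≤ ‖∇ℓ(x)‖`, so the factor `‖x − x*‖` compensates exactly:
turning the direction costs at most `‖x − x*‖ · 2L‖x − y‖/‖∇ℓ(x)‖ ≤ (2L/μ)‖x − y‖`, and
changing the length costs at most `‖x − y‖`.
-/

open NormedSpace (normalize norm_smul_normalize norm_normalize)

section StrongConvexity

variable {E : Type*} [NormedAddCommGroup E] [NormedSpace ℝ E] {s : Set E} {m : ℝ} {f : E → ℝ}
  {x y : E}

theorem add_lineDeriv_add_le_of_strongConvexOn {d : ℝ} (hf : StrongConvexOn s m f) (hx : x ∈ s)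
    (hy : y ∈ s) (hd : HasLineDerivAt ℝ f d x (y - x)) :
    f x + d + m / 2 * ‖y - x‖ ^ 2 ≤ f y := by
  have slope_le : ∀ t ∈ Set.Ioo (0 : ℝ) 1,
      t⁻¹ • (f (x + t • (y - x)) - f x) ≤ f y - f x - (1 - t) * (m / 2 * ‖y - x‖ ^ 2) := by
    rintro t ⟨ht0, ht1⟩
    have hconv := hf.2 hx hy (sub_nonneg.2 ht1.le) ht0.le (sub_add_cancel 1 t)
    have hpoint : (1 - t) • x + t • y = x + t • (y - x) := by module
    rw [hpoint, norm_sub_rev] at hconv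
    rw [smul_eq_mul, inv_mul_le_iff₀ ht0]
    simp only [smul_eq_mul] at hconv
    linarith
  have tendsto_bound : Filter.Tendsto
      (fun t : ℝ ↦ f y - f x - (1 - t) * (m / 2 * ‖y - x‖ ^ 2)) (nhdsWithin 0 (Set.Ioi 0))
      (nhds (f y - f x - (1 - 0) * (m / 2 * ‖y - x‖ ^ 2))) :=
    (Continuous.tendsto (by fun_prop) 0).mono_left nhdsWithin_le_nhds
  have hle := le_of_tendsto_of_tendsto hd.tendsto_slope_zero_right tendsto_bound
    (Filter.eventually_of_mem (Ioo_mem_nhdsGT one_pos) slope_le)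
  linarith

theorem mul_norm_sub_sq_le_fderiv_sub_of_strongConvexOn {f'x f'y : StrongDual ℝ E}
    (hf : StrongConvexOn s m f) (hx : x ∈ s) (hy : y ∈ s) (hf'x : HasFDerivAt f f'x x)
    (hf'y : HasFDerivAt f f'y y) : m * ‖x - y‖ ^ 2 ≤ (f'x - f'y) (x - y) := by
  have hxy := add_lineDeriv_add_le_of_strongConvexOn hf hx hy (hf'x.hasLineDerivAt (y - x))
  have hyx := add_lineDeriv_add_le_of_strongConvexOn hf hy hx (hf'y.hasLineDerivAt (x - y))
  rw [norm_sub_rev, ← neg_sub x y, map_neg] at hxy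
  rw [sub_apply]
  linarith

theorem mul_norm_sub_le_norm_fderiv_sub_of_strongConvexOn {f'x f'y : StrongDual ℝ E}
    (hf : StrongConvexOn s m f) (hx : x ∈ s) (hy : y ∈ s) (hf'x : HasFDerivAt f f'x x)
    (hf'y : HasFDerivAt f f'y y) : m * ‖x - y‖ ≤ ‖f'x - f'y‖ := by
  rcases (norm_nonneg (x - y)).eq_or_lt with h | hpos
  · simp [← h]
  · refine le_of_mul_le_mul_right ?_ hpos
    calc m * ‖x - y‖ * ‖x - y‖ = m * ‖x - y‖ ^ 2 := by ring
      _ ≤ (f'x - f'y) (x - y) :=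
        mul_norm_sub_sq_le_fderiv_sub_of_strongConvexOn hf hx hy hf'x hf'y
      _ ≤ ‖f'x - f'y‖ * ‖x - y‖ := (le_abs_self _).trans ((f'x - f'y).le_opNorm _)

end StrongConvexity

section Normalize

variable {E F : Type*} [NormedAddCommGroup E] [NormedAddCommGroup F] [NormedSpace ℝ F]

theorem norm_normalize_le_one (a : F) : ‖normalize a‖ ≤ 1 := by
  rcases eq_or_ne a 0 with rfl | ha
  · simp
  · exact (norm_normalize ha).le

theorem norm_mul_norm_normalize_sub_normalize_le (a b : F) :
    ‖a‖ * ‖normalize a - normalize b‖ ≤ 2 * ‖a - b‖ := by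
  have hsplit : ‖a‖ • (normalize a - normalize b) = (a - b) + (‖b‖ - ‖a‖) • normalize b := by
    rw [smul_sub, sub_smul, norm_smul_normalize, norm_smul_normalize]
    abel
  calc ‖a‖ * ‖normalize a - normalize b‖ = ‖(a - b) + (‖b‖ - ‖a‖) • normalize b‖ := by
        rw [← hsplit, norm_smul, norm_norm]
    _ ≤ ‖a - b‖ + |‖b‖ - ‖a‖| * ‖normalize b‖ := by
        simpa only [norm_smul, Real.norm_eq_abs] using
          norm_add_le (a - b) ((‖b‖ - ‖a‖) • normalize b)
    _ ≤ ‖a - b‖ + ‖a - b‖ * 1 := by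
        gcongr
        · exact (abs_norm_sub_norm_le b a).trans_eq (norm_sub_rev b a)
        · exact norm_normalize_le_one b
    _ = 2 * ‖a - b‖ := by ring

theorem norm_smul_normalize_sub_smul_normalize_le {r s μ : ℝ} {a b : F} (hμ : 0 < μ)
    (hra : μ * |r| ≤ ‖a‖) :
    ‖r • normalize a - s • normalize b‖ ≤ |r - s| + 2 / μ * ‖a - b‖ := by
  have direction_le : |r| * ‖normalize a - normalize b‖ ≤ 2 / μ * ‖a - b‖ := by
    rw [div_mul_eq_mul_div, le_div_iff₀' hμ, ← mul_assoc]
    exact (mul_le_mul_of_nonneg_right hra (norm_nonneg _)).trans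
      (norm_mul_norm_normalize_sub_normalize_le a b)
  calc ‖r • normalize a - s • normalize b‖
      = ‖(r - s) • normalize b + r • (normalize a - normalize b)‖ := by congr 1; module
    _ ≤ |r - s| * ‖normalize b‖ + |r| * ‖normalize a - normalize b‖ := by
        simpa only [norm_smul, Real.norm_eq_abs] using
          norm_add_le ((r - s) • normalize b) (r • (normalize a - normalize b))
    _ ≤ |r - s| + 2 / μ * ‖a - b‖ :=
        add_le_add (mul_le_of_le_one_right (abs_nonneg _) (norm_normalize_le_one b)) direction_le

theorem norm_smul_normalize_sub_le_of_mul_norm_sub_le {μ L : ℝ} (hμ : 0 < μ) (g : E → F)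
    {c x y : E} (hlower : μ * ‖x - c‖ ≤ ‖g x‖) (hlip : ‖g x - g y‖ ≤ L * ‖x - y‖) :
    ‖‖x - c‖ • normalize (g x) - ‖y - c‖ • normalize (g y)‖ ≤ (1 + 2 * L / μ) * ‖x - y‖ :=
  calc ‖‖x - c‖ • normalize (g x) - ‖y - c‖ • normalize (g y)‖
      ≤ |‖x - c‖ - ‖y - c‖| + 2 / μ * ‖g x - g y‖ :=
        norm_smul_normalize_sub_smul_normalize_le hμ (by rwa [abs_norm])
    _ ≤ ‖x - y‖ + 2 / μ * (L * ‖x - y‖) := by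
        gcongr
        simpa only [sub_sub_sub_cancel_right] using abs_norm_sub_norm_le (x - c) (y - c)
    _ = (1 + 2 * L / μ) * ‖x - y‖ := by ring

end Normalize

section Hilbert

variable {E : Type*} [NormedAddCommGroup E] [InnerProductSpace ℝ E] [CompleteSpace E]

theorem mul_norm_sub_le_norm_gradient_of_isLocalMin {s : Set E} {f : E → ℝ} {m : ℝ} {c x : E}
    (hf : StrongConvexOn s m f) (hc : c ∈ s) (hx : x ∈ s) (hdc : DifferentiableAt ℝ f c)
    (hdx : DifferentiableAt ℝ f x) (hmin : IsLocalMin f c) : m * ‖x - c‖ ≤ ‖gradient f x‖ := by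
  have hle := mul_norm_sub_le_norm_fderiv_sub_of_strongConvexOn hf hx hc hdx.hasFDerivAt
    hdc.hasFDerivAt
  rwa [hmin.fderiv_eq_zero, sub_zero, ← toDual_gradient, LinearIsometryEquiv.norm_map] at hle

theorem dibs_term_lipschitz_general (ℓ : E → ℝ) (μ L : ℝ) (hμ : 0 < μ)
    (hdiff : Differentiable ℝ ℓ) (hsc : StrongConvexOn Set.univ μ ℓ)
    (hsmooth : ∀ x y, ‖gradient ℓ x - gradient ℓ y‖ ≤ L * ‖x - y‖)
    (xstar : E) (hmin : ∀ y, ℓ xstar ≤ ℓ y) (x y : E) :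
    ‖‖x - xstar‖ • normalize (gradient ℓ x) - ‖y - xstar‖ • normalize (gradient ℓ y)‖ ≤
      (1 + 2 * L / μ) * ‖x - y‖ :=
  norm_smul_normalize_sub_le_of_mul_norm_sub_le hμ (gradient ℓ)
    (mul_norm_sub_le_norm_gradient_of_isLocalMin hsc (Set.mem_univ _) (Set.mem_univ _)
      (hdiff xstar) (hdiff x) (Filter.Eventually.of_forall hmin))
    (hsmooth x y)

end Hilbert

theorem dibsTerm_eq_norm_sub_smul_normalize {n : ℕ} (ℓ : EuclideanSpace ℝ (Fin n) → ℝ)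
    (xstar x : EuclideanSpace ℝ (Fin n)) :
    dibsTerm ℓ xstar x = ‖x - xstar‖ • normalize (gradient ℓ x) := by
  rcases eq_or_ne x xstar with rfl | hx
  · simp [dibsTerm]
  · rw [dibsTerm, if_neg hx, NormedSpace.normalize, smul_smul, div_eq_mul_inv]

theorem dibs_term_lipschitz {n : ℕ}
    (ℓ : EuclideanSpace ℝ (Fin n) → ℝ) (μ L : ℝ) (hμ : 0 < μ)
    (hdiff : Differentiable ℝ ℓ)
    (hsc : ConvexOn ℝ Set.univ (fun x => ℓ x - μ / 2 * ‖x‖ ^ 2))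
    (hsmooth : ∀ x y, ‖gradient ℓ x - gradient ℓ y‖ ≤ L * ‖x - y‖)
    (xstar : EuclideanSpace ℝ (Fin n))
    (hmin : ∀ y, ℓ xstar ≤ ℓ y) :
    ∀ x y : EuclideanSpace ℝ (Fin n),
      ‖dibsTerm ℓ xstar x - dibsTerm ℓ xstar y‖ ≤ (1 + 2 * L / μ) * ‖x - y‖ := by
  simpa only [dibsTerm_eq_norm_sub_smul_normalize] using
    dibs_term_lipschitz_general ℓ μ L hμ hdiff (strongConvexOn_iff_convex.2 hsc) hsmooth xstar hmin
end

section
/- Let ℓ^1,…,ℓ^N : ℝ^n → ℝ be differentiable, with ℓ^i μᵢ-strongly convex (μᵢ > 0) and Lᵢ-smooth, and let x*ⁱ be the global minimizer of ℓ^i. Then the DiBS vector field h(x) = Σ_{i=1}^N d_i(x) is Lipschitz continuous on ℝ^n with constant L_h = Σ_{i=1}^N (1 + 2Lᵢ/μᵢ). -/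
open scoped RealInnerProductSpace BigOperators Classical

/-!
Write a summand of the field as `r(x) u(x)`, where `r(x) = ‖x - x*‖` and `u(x)` is the unit vector
along `∇ℓ(x)`, and split
`r(x) u(x) - r(y) u(y) = (r(x) - r(y)) u(x) + r(y) (u(x) - u(y))`.
The first term has norm at most `‖x - y‖`. Normalization is only `2 / ‖∇ℓ(y)‖`-Lipschitz at `∇ℓ(y)`,
a constant that blows up near the minimizer, but strong convexity gives `μ r(y) ≤ ‖∇ℓ(y)‖`, so
that the factor `r(y)` compensates and the second term has norm at most
`(2 / μ) ‖∇ℓ(x) - ∇ℓ(y)‖`.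
-/

section Normalize

open NormedSpace (normalize norm_smul_normalize norm_normalize)

variable {V : Type*} [NormedAddCommGroup V] [NormedSpace ℝ V]

theorem norm_normalize_le_one_s17 (p : V) : ‖normalize p‖ ≤ 1 := by
  rcases eq_or_ne p 0 with rfl | hp
  · simp
  · exact (norm_normalize hp).le

theorem norm_mul_norm_normalize_sub_normalize_le_s17 (p q : V) :
    ‖q‖ * ‖normalize p - normalize q‖ ≤ 2 * ‖p - q‖ := by
  have split : ‖q‖ • (normalize p - normalize q) = (p - q) - (‖p‖ - ‖q‖) • normalize p := by
    rw [smul_sub, sub_smul, norm_smul_normalize, norm_smul_normalize]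
    abel
  calc ‖q‖ * ‖normalize p - normalize q‖
      = ‖(p - q) - (‖p‖ - ‖q‖) • normalize p‖ := by rw [← split, norm_smul, norm_norm]
    _ ≤ ‖p - q‖ + |‖p‖ - ‖q‖| * ‖normalize p‖ := by
        simpa only [norm_smul, Real.norm_eq_abs] using
          norm_sub_le (p - q) ((‖p‖ - ‖q‖) • normalize p)
    _ ≤ ‖p - q‖ + ‖p - q‖ * 1 := by
        gcongr
        · exact abs_norm_sub_norm_le p q
        · exact norm_normalize_le_one_s17 p
    _ = 2 * ‖p - q‖ := by ring

theorem norm_smul_normalize_sub_smul_normalize_le_s17 {p q : V} {m r s : ℝ} (hm : 0 < m)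
    (hsq : m * |s| ≤ ‖q‖) :
    ‖r • normalize p - s • normalize q‖ ≤ |r - s| + 2 / m * ‖p - q‖ := by
  have radial : ‖(r - s) • normalize p‖ ≤ |r - s| := by
    rw [norm_smul, Real.norm_eq_abs]
    exact mul_le_of_le_one_right (abs_nonneg _) (norm_normalize_le_one_s17 p)
  have angular : ‖s • (normalize p - normalize q)‖ ≤ 2 / m * ‖p - q‖ := by
    rw [norm_smul, Real.norm_eq_abs, div_mul_eq_mul_div, le_div_iff₀' hm, ← mul_assoc]
    exact (mul_le_mul_of_nonneg_right hsq (norm_nonneg _)).trans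
      (norm_mul_norm_normalize_sub_normalize_le_s17 p q)
  calc ‖r • normalize p - s • normalize q‖
      = ‖(r - s) • normalize p + s • (normalize p - normalize q)‖ := by congr 1; module
    _ ≤ |r - s| + 2 / m * ‖p - q‖ := norm_add_le_of_le radial angular

end Normalize

section StrongConvexity

open Filter Topology

theorem uniformConvexOn_add_lineDeriv_add_le {E : Type*} [NormedAddCommGroup E] [NormedSpace ℝ E]
    {s : Set E} {φ : ℝ → ℝ} {f : E → ℝ} {x y : E} {d : ℝ} (hf : UniformConvexOn s φ f)
    (hx : x ∈ s) (hy : y ∈ s) (hd : HasLineDerivAt ℝ f d x (y - x)) :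
    f x + d + φ ‖x - y‖ ≤ f y := by
  have slope_le : ∀ t ∈ Set.Ioo (0 : ℝ) 1,
      t⁻¹ • (f (x + t • (y - x)) - f x) ≤ f y - f x - (1 - t) * φ ‖x - y‖ := by
    rintro t ⟨ht₀, ht₁⟩
    have hconv := hf.2 hx hy (sub_nonneg.2 ht₁.le) ht₀.le (sub_add_cancel 1 t)
    rw [show (1 - t) • x + t • y = x + t • (y - x) by module] at hconv
    rw [smul_eq_mul, inv_mul_le_iff₀ ht₀]
    simp only [smul_eq_mul] at hconv
    linarith
  have bound_tendsto : Tendsto (fun t : ℝ => f y - f x - (1 - t) * φ ‖x - y‖) (𝓝[>] 0)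
      (𝓝 (f y - f x - φ ‖x - y‖)) :=
    tendsto_nhdsWithin_of_tendsto_nhds <| Continuous.tendsto' (by fun_prop) _ _ (by simp)
  have d_le : d ≤ f y - f x - φ ‖x - y‖ :=
    le_of_tendsto_of_tendsto hd.tendsto_slope_zero_right bound_tendsto <|
      eventually_of_mem (Ioo_mem_nhdsGT one_pos) slope_le
  linarith

variable {E : Type*} [NormedAddCommGroup E] [InnerProductSpace ℝ E] [CompleteSpace E]
  {s : Set E} {f : E → ℝ} {m : ℝ} {x y gx gy : E}

theorem strongConvexOn_add_inner_add_le (hf : StrongConvexOn s m f) (hx : x ∈ s) (hy : y ∈ s)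
    (hgx : HasGradientAt f gx x) :
    f x + ⟪gx, y - x⟫ + m / 2 * ‖x - y‖ ^ 2 ≤ f y :=
  uniformConvexOn_add_lineDeriv_add_le hf hx hy (hgx.hasFDerivAt.hasLineDerivAt (y - x))

theorem strongConvexOn_mul_norm_sub_sq_le_inner (hf : StrongConvexOn s m f) (hx : x ∈ s)
    (hy : y ∈ s) (hgx : HasGradientAt f gx x) (hgy : HasGradientAt f gy y) :
    m * ‖x - y‖ ^ 2 ≤ ⟪gx - gy, x - y⟫ := by
  have hxy := strongConvexOn_add_inner_add_le hf hx hy hgx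
  have hyx := strongConvexOn_add_inner_add_le hf hy hx hgy
  rw [← neg_sub x y, inner_neg_right] at hxy
  rw [norm_sub_rev y x] at hyx
  rw [inner_sub_left]
  linarith

theorem strongConvexOn_mul_norm_sub_le_norm_sub (hf : StrongConvexOn s m f) (hx : x ∈ s)
    (hy : y ∈ s) (hgx : HasGradientAt f gx x) (hgy : HasGradientAt f gy y) :
    m * ‖x - y‖ ≤ ‖gx - gy‖ := by
  rcases (norm_nonneg (x - y)).eq_or_lt with hxy | hxy
  · simp [← hxy]
  · refine le_of_mul_le_mul_right ?_ hxy
    calc m * ‖x - y‖ * ‖x - y‖ = m * ‖x - y‖ ^ 2 := by ring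
      _ ≤ ⟪gx - gy, x - y⟫ := strongConvexOn_mul_norm_sub_sq_le_inner hf hx hy hgx hgy
      _ ≤ ‖gx - gy‖ * ‖x - y‖ := real_inner_le_norm _ _

theorem gradient_eq_zero_of_isLocalMin (h : IsLocalMin f x) : gradient f x = 0 := by
  rw [gradient, h.fderiv_eq_zero, map_zero]

end StrongConvexity

section DibsDirection

open NormedSpace (normalize)

variable {E : Type*} [NormedAddCommGroup E] [InnerProductSpace ℝ E] [CompleteSpace E]

/-- The summand `d_i` of the DiBS vector field for the loss `f` with minimizer `z`, in an arbitrary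
Hilbert space. Since `normalize 0 = 0`, it vanishes wherever the gradient does. -/
noncomputable def dibsDirection (f : E → ℝ) (z x : E) : E :=
  ‖x - z‖ • normalize (gradient f x)

theorem dibsField_eq_sum_dibsDirection {n N : ℕ} (ℓ : Fin N → EuclideanSpace ℝ (Fin n) → ℝ)
    (xstar : Fin N → EuclideanSpace ℝ (Fin n)) (x : EuclideanSpace ℝ (Fin n)) :
    dibsField ℓ xstar x = ∑ i, dibsDirection (ℓ i) (xstar i) x := by
  refine Finset.sum_congr rfl fun i _ => ?_
  split_ifs with h
  · rw [dibsDirection, NormedSpace.normalize, smul_smul, div_eq_mul_inv]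
  · simp [dibsDirection, not_not.1 h]

theorem norm_dibsDirection_sub_dibsDirection_le {f : E → ℝ} {m : ℝ} {z : E} (hm : 0 < m)
    (hf : StrongConvexOn Set.univ m f) (hdiff : Differentiable ℝ f) (hz : IsLocalMin f z)
    (x y : E) :
    ‖dibsDirection f z x - dibsDirection f z y‖ ≤
      ‖x - y‖ + 2 / m * ‖gradient f x - gradient f y‖ := by
  have grad_lower : m * |‖y - z‖| ≤ ‖gradient f y‖ := by
    simpa only [abs_norm, gradient_eq_zero_of_isLocalMin hz, sub_zero] using
      strongConvexOn_mul_norm_sub_le_norm_sub hf (Set.mem_univ y) (Set.mem_univ z)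
        (hdiff y).hasGradientAt (hdiff z).hasGradientAt
  have radius_sub : |‖x - z‖ - ‖y - z‖| ≤ ‖x - y‖ := by
    simpa only [sub_sub_sub_cancel_right] using abs_norm_sub_norm_le (x - z) (y - z)
  exact (norm_smul_normalize_sub_smul_normalize_le_s17 hm grad_lower).trans
    (add_le_add_left radius_sub _)

theorem dibs_field_lipschitz_general {ι : Type*} [Fintype ι] {ℓ : ι → E → ℝ} {μ L : ι → ℝ}
    (hμ : ∀ i, 0 < μ i) (hdiff : ∀ i, Differentiable ℝ (ℓ i))
    (hsc : ∀ i, StrongConvexOn Set.univ (μ i) (ℓ i))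
    (hsmooth : ∀ i x y, ‖gradient (ℓ i) x - gradient (ℓ i) y‖ ≤ L i * ‖x - y‖)
    {xstar : ι → E} (hmin : ∀ i y, ℓ i (xstar i) ≤ ℓ i y) (x y : E) :
    ‖∑ i, dibsDirection (ℓ i) (xstar i) x - ∑ i, dibsDirection (ℓ i) (xstar i) y‖ ≤
      (∑ i, (1 + 2 * L i / μ i)) * ‖x - y‖ := by
  rw [← Finset.sum_sub_distrib, Finset.sum_mul]
  refine norm_sum_le_of_le _ fun i _ => ?_
  have hμi := hμ i
  calc ‖dibsDirection (ℓ i) (xstar i) x - dibsDirection (ℓ i) (xstar i) y‖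
      ≤ ‖x - y‖ + 2 / μ i * ‖gradient (ℓ i) x - gradient (ℓ i) y‖ :=
        norm_dibsDirection_sub_dibsDirection_le hμi (hsc i) (hdiff i) (.of_forall (hmin i)) x y
    _ ≤ ‖x - y‖ + 2 / μ i * (L i * ‖x - y‖) := by gcongr; exact hsmooth i x y
    _ = (1 + 2 * L i / μ i) * ‖x - y‖ := by ring

end DibsDirection

theorem dibs_field_lipschitz {n N : ℕ}
    (ℓ : Fin N → EuclideanSpace ℝ (Fin n) → ℝ) (μ L : Fin N → ℝ)
    (hμ : ∀ i, 0 < μ i)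
    (hdiff : ∀ i, Differentiable ℝ (ℓ i))
    (hsc : ∀ i, ConvexOn ℝ Set.univ (fun x => ℓ i x - μ i / 2 * ‖x‖ ^ 2))
    (hsmooth : ∀ i, ∀ x y, ‖gradient (ℓ i) x - gradient (ℓ i) y‖ ≤ L i * ‖x - y‖)
    (xstar : Fin N → EuclideanSpace ℝ (Fin n))
    (hmin : ∀ i, ∀ y, ℓ i (xstar i) ≤ ℓ i y) :
    ∀ x y : EuclideanSpace ℝ (Fin n),
      ‖dibsField ℓ xstar x - dibsField ℓ xstar y‖ ≤
        (∑ i, (1 + 2 * L i / μ i)) * ‖x - y‖ := by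
  simp only [dibsField_eq_sum_dibsDirection]
  exact dibs_field_lipschitz_general hμ hdiff (fun i => strongConvexOn_iff_convex.2 (hsc i))
    hsmooth hmin
end
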